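/- For every natural number d, the set of ideals I of ℂ[T₁,T₂] that are invariant under the (ℂ*)²-action (i.e. for all λ, μ ∈ ℂ* the ℂ-algebra automorphism sending T₁ ↦ λT₁, T₂ ↦ μT₂ maps I into I) and for which the quotient ℂ[T₁,T₂]/I is a finite-dimensional ℂ-vector space of dimension exactly d, is finite. -/

import Mathlib

/-!
An ideal stable under the single substitution `T₁ ↦ 2T₁`, `T₂ ↦ 3T₂` is already monomial: this map
is diagonal in the monomial basis, with pairwise distinct eigenvalues `2 ^ a * 3 ^ b`, so a stable
subspace contains every term of each of its elements (`monomial_coeff_mem`). Hence such an ideal is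
determined by the monomials it contains. If its colength is `d`, then `1, Tᵢ, …, Tᵢ ^ d` are linearly
dependent modulo the ideal, so by monomiality some `Tᵢ ^ k` with `k ≤ d` lies in it
(`X_pow_finrank_mem`). All monomials outside the box of exponents `≤ d` are therefore in the ideal,
and the ideal is determined by a subset of this finite box.
-/

open MvPolynomial

/-- The `ℂ`-algebra automorphism of `ℂ[T₁,T₂]` determined by `T₁ ↦ λT₁`, `T₂ ↦ μT₂`. -/
noncomputable def torusScale (l m : ℂ) :
    MvPolynomial (Fin 2) ℂ →ₐ[ℂ] MvPolynomial (Fin 2) ℂ :=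
  MvPolynomial.aeval (fun i : Fin 2 => (if i = 0 then l else m) • MvPolynomial.X i)

lemma torusScale_monomial (l m : ℂ) (s : Fin 2 →₀ ℕ) (c : ℂ) :
    torusScale l m (monomial s c) = (l ^ s 0 * m ^ s 1) • monomial s c := by
  have hs : s = Finsupp.single 0 (s 0) + Finsupp.single 1 (s 1) := by
    ext i
    fin_cases i <;> simp
  have hX : monomial s c = C c * (X 0 ^ s 0 * X 1 ^ s 1) := by
    conv_lhs => rw [hs]
    rw [X_pow_eq_monomial, X_pow_eq_monomial, monomial_mul, C_mul_monomial]
    simp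
  rw [hX, torusScale]
  simp only [map_mul, map_pow, aeval_X, aeval_C, smul_eq_C_mul, algebraMap_eq]
  simp
  ring

lemma coeff_torusScale (l m : ℂ) (f : MvPolynomial (Fin 2) ℂ) (s : Fin 2 →₀ ℕ) :
    coeff s (torusScale l m f) = l ^ s 0 * m ^ s 1 * coeff s f := by
  induction f using MvPolynomial.induction_on' with
  | monomial t c =>
    rw [torusScale_monomial, coeff_smul, coeff_monomial]
    split_ifs with h
    · subst h; rfl
    · simp
  | add p q hp hq => simp only [map_add, coeff_add, hp, hq]; ring

/-- The weights `2 ^ a * 3 ^ b` of distinct monomials are distinct. -/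
lemma weight_injective {s t : Fin 2 →₀ ℕ}
    (h : (2 : ℂ) ^ s 0 * 3 ^ s 1 = 2 ^ t 0 * 3 ^ t 1) : s = t := by
  have hn : 2 ^ s 0 * 3 ^ s 1 = 2 ^ t 0 * 3 ^ t 1 := by exact_mod_cast h
  have h0 := congrArg (fun n => n.factorization 2) hn
  have h1 := congrArg (fun n => n.factorization 3) hn
  have h2 : Nat.factorization 3 2 = 0 := Nat.factorization_eq_zero_of_not_dvd (by norm_num)
  have h3 : Nat.factorization 2 3 = 0 := Nat.factorization_eq_zero_of_not_dvd (by norm_num)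
  simp [Nat.factorization_mul, Nat.factorization_pow, Nat.prime_two.factorization_self,
    Nat.prime_three.factorization_self, h2, h3] at h0 h1
  ext i
  fin_cases i
  · exact h0
  · exact h1

/-- An ideal stable under `T₁ ↦ 2T₁`, `T₂ ↦ 3T₂` contains every term of each of its elements.
The proof is by induction on the number of terms: subtracting from the image of `f` a multiple of
`f` cancels one term and rescales the others by nonzero factors. -/
lemma monomial_coeff_mem {I : Ideal (MvPolynomial (Fin 2) ℂ)}
    (hI : ∀ f ∈ I, torusScale 2 3 f ∈ I) {f : MvPolynomial (Fin 2) ℂ} (hf : f ∈ I)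
    (s : Fin 2 →₀ ℕ) : monomial s (coeff s f) ∈ I := by
  induction hn : f.support.card using Nat.strong_induction_on generalizing f with
  | _ n ih =>
    by_cases h : ∃ t ∈ f.support, t ≠ s
    · obtain ⟨t, ht, hts⟩ := h
      set w : (Fin 2 →₀ ℕ) → ℂ := fun u => 2 ^ u 0 * 3 ^ u 1 with hw
      set g := torusScale 2 3 f - C (w t) * f with hg
      have hgc : ∀ u, coeff u g = (w u - w t) * coeff u f := by
        intro u
        rw [hg, coeff_sub, coeff_torusScale, coeff_C_mul]
        ring
      have hgI : g ∈ I := I.sub_mem (hI f hf) (I.mul_mem_left _ hf)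
      have hlt : g.support.card < n := by
        rw [← hn]
        refine Finset.card_lt_card ⟨fun u hu => ?_, fun hsub => ?_⟩
        · rw [mem_support_iff, hgc] at hu
          exact mem_support_iff.2 (right_ne_zero_of_mul hu)
        · have := hsub ht
          rw [mem_support_iff, hgc, sub_self, zero_mul] at this
          exact this rfl
      have hmem := ih _ hlt hgI rfl
      have hne : w s - w t ≠ 0 := fun h0 => hts (weight_injective (sub_eq_zero.1 h0)).symm
      have := I.mul_mem_left (C (w s - w t)⁻¹) hmem
      rwa [hgc, C_mul_monomial, inv_mul_cancel_left₀ hne] at this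
    · push Not at h
      have hfs : f = monomial s (coeff s f) := by
        ext u
        rw [coeff_monomial]
        split_ifs with hu
        · rw [hu]
        · by_contra hne
          exact hu (h u (mem_support_iff.2 hne)).symm
      rwa [← hfs]

lemma monomial_one_mem {I : Ideal (MvPolynomial (Fin 2) ℂ)}
    (hI : ∀ f ∈ I, torusScale 2 3 f ∈ I) {f : MvPolynomial (Fin 2) ℂ} (hf : f ∈ I)
    {s : Fin 2 →₀ ℕ} (hs : coeff s f ≠ 0) : monomial s (1 : ℂ) ∈ I := by
  have := I.mul_mem_left (C (coeff s f)⁻¹) (monomial_coeff_mem hI hf s)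
  rwa [C_mul_monomial, inv_mul_cancel₀ hs] at this

lemma X_pow_finrank_mem {I : Ideal (MvPolynomial (Fin 2) ℂ)}
    (hI : ∀ f ∈ I, torusScale 2 3 f ∈ I)
    [FiniteDimensional ℂ (MvPolynomial (Fin 2) ℂ ⧸ I)] (i : Fin 2) :
    (X i : MvPolynomial (Fin 2) ℂ) ^ Module.finrank ℂ (MvPolynomial (Fin 2) ℂ ⧸ I) ∈ I := by
  set d := Module.finrank ℂ (MvPolynomial (Fin 2) ℂ ⧸ I) with hd
  have hdep : ¬ LinearIndependent ℂ
      (fun k : Fin (d + 1) => Ideal.Quotient.mkₐ ℂ I (X i ^ (k : ℕ))) := by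
    intro h
    have := h.fintype_card_le_finrank
    rw [Fintype.card_fin] at this
    omega
  rw [Fintype.linearIndependent_iff] at hdep
  push Not at hdep
  obtain ⟨c, hc, k, hk⟩ := hdep
  simp only [← map_smul, ← map_sum] at hc
  have hmem : ∑ j : Fin (d + 1), c j • (X i : MvPolynomial (Fin 2) ℂ) ^ (j : ℕ) ∈ I :=
    Ideal.Quotient.eq_zero_iff_mem.1 hc
  have hcoeff : coeff (Finsupp.single i (k : ℕ))
      (∑ j : Fin (d + 1), c j • (X i : MvPolynomial (Fin 2) ℂ) ^ (j : ℕ)) = c k := by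
    rw [coeff_sum, Finset.sum_eq_single k]
    · simp [coeff_smul, X_pow_eq_monomial]
    · intro j _ hj
      have hne : Finsupp.single i (j : ℕ) ≠ Finsupp.single i (k : ℕ) := fun h =>
        hj (Fin.ext (Finsupp.single_injective i h))
      rw [coeff_smul, X_pow_eq_monomial, coeff_monomial, if_neg hne, smul_zero]
    · simp
  have hXk := monomial_one_mem hI hmem (hcoeff ▸ hk)
  rw [← X_pow_eq_monomial] at hXk
  exact I.mem_of_dvd (pow_dvd_pow _ (Nat.lt_succ_iff.1 k.2)) hXk

/-- A stable ideal is contained in any ideal with at least the same monomials of exponents at most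
`d`, provided the latter contains `T₁ ^ d` and `T₂ ^ d`. -/
lemma le_of_monomials {I J : Ideal (MvPolynomial (Fin 2) ℂ)} {d : ℕ}
    (hI : ∀ f ∈ I, torusScale 2 3 f ∈ I) (hJ : ∀ i, (X i : MvPolynomial (Fin 2) ℂ) ^ d ∈ J)
    (h : ∀ s : Fin 2 →₀ ℕ, (∀ i, s i ≤ d) → monomial s (1 : ℂ) ∈ I → monomial s (1 : ℂ) ∈ J) :
    I ≤ J := by
  intro f hf
  rw [f.as_sum]
  refine J.sum_mem fun s hs => ?_
  have hsJ : monomial s (1 : ℂ) ∈ J := by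
    by_cases hb : ∀ i, s i ≤ d
    · exact h s hb (monomial_one_mem hI hf (mem_support_iff.1 hs))
    · push Not at hb
      obtain ⟨i, hi⟩ := hb
      refine J.mem_of_dvd ?_ (hJ i)
      rw [X_pow_eq_monomial]
      exact monomial_dvd_monomial.2 ⟨Or.inr (Finsupp.single_le_iff.2 hi.le), dvd_rfl⟩
  simpa [C_mul_monomial] using J.mul_mem_left (C (coeff s f)) hsJ

/-- There are only finitely many `(ℂ*)²`-invariant ideals of `ℂ[T₁,T₂]` of colength
exactly `d`. -/
theorem finite_invariant_ideals_of_colength (d : ℕ) :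
    {I : Ideal (MvPolynomial (Fin 2) ℂ) |
      (∀ l m : ℂ, l ≠ 0 → m ≠ 0 → ∀ f ∈ I, torusScale l m f ∈ I) ∧
      FiniteDimensional ℂ (MvPolynomial (Fin 2) ℂ ⧸ I) ∧
      Module.finrank ℂ (MvPolynomial (Fin 2) ℂ ⧸ I) = d}.Finite := by
  have hbox : {s : Fin 2 →₀ ℕ | ∀ i, s i ≤ d}.Finite :=
    (Set.finite_Iic (Finsupp.equivFunOnFinite.symm fun _ : Fin 2 => d)).subset
      fun s hs i => by simpa using hs i
  refine Set.Finite.of_injOn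
    (f := fun I => {s : Fin 2 →₀ ℕ | (∀ i, s i ≤ d) ∧ monomial s (1 : ℂ) ∈ I})
    (t := {S | S ⊆ {s : Fin 2 →₀ ℕ | ∀ i, s i ≤ d}})
    (fun I _ s hs => hs.1) ?_ hbox.finite_subsets
  rintro I ⟨hI, hIfin, hId⟩ J ⟨hJ, hJfin, hJd⟩ hIJ
  have hI' := hI 2 3 (by norm_num) (by norm_num)
  have hJ' := hJ 2 3 (by norm_num) (by norm_num)
  refine le_antisymm
    (le_of_monomials hI' (fun i => hJd ▸ X_pow_finrank_mem hJ' i) fun s hs hm => ?_)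
    (le_of_monomials hJ' (fun i => hId ▸ X_pow_finrank_mem hI' i) fun s hs hm => ?_)
  · exact ((Set.ext_iff.1 hIJ s).1 ⟨hs, hm⟩).2
  · exact ((Set.ext_iff.1 hIJ s).2 ⟨hs, hm⟩).2
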